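/- Let n ≥ 2 and let Λ be an n-dimensional isotropic subspace of ℂ^{2n+1}. Then every vertex (extreme point) x of the polytope 𝒫(Λ) is a 0–1 vector; more precisely, x = χ(S) for some maximal admissible subset S ∈ 𝒟(Λ). -/

import Mathlib

/-!
The function `g = g_Λ` is bisubmodular, `g(S ∩ T) + g(S ⊔ T) ≤ g(S) + g(T)` (`gF_bisubmodular`), and
a polytope `{x | x(S) ≤ g(S)}` with `g` integral and bisubmodular has integral vertices
(`coord_mem_int`).

For bisubmodularity, `rk` is submodular for `∩` and `∪`, and `S ∪ T` arises from the admissible set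
`S ⊔ T` by adding some number `k` of pairs `{q, q̄}`. As the barred elements contribute exactly `k`
to the difference, it is enough that these pairs raise the rank by at least `k` (`rkF_add_pairs`).
One pair at a time, this says that a coordinate `q` or `q̄` does not depend on those of an admissible
set missing both (`exists_nonzero`), which holds since `Λ` has codimension `1` in `Λ^⊥`, too small
for `Λ^⊥ / Λ` to contain a hyperbolic plane.

For integrality, bisubmodularity makes the tight sets of `x` closed under `∩` and `⊔`
(`tight_inter_sqcup`). Let `M` be a minimal tight set containing a fractional element; since `x(M)`
is an integer, it contains two, `a` and `b`. Minimality, applied to `M ∩ S` and `M ∩ (M ⊔ S)`, shows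
that every tight `S` treats `a` and `b` alike, so `x` moves freely along the difference of the
corresponding signed unit vectors, and is not extreme.

Finally the inequalities for singletons give `0 ≤ x ≤ 1`, and for `x = χ(S)` with `S` maximal
admissible the inequality of `S` itself says `rk(S) ≥ n`.
-/

open scoped BigOperators

/-- Index set for the coordinates of `ℂ^{2n+1}`: `none` is the coordinate `0`,
`some (q, false)` is the coordinate `q+1 ∈ [n]`, and `some (q, true)` is the barred
coordinate `(q+1)̄ ∈ [n]̄`. -/
abbrev Idx (n : ℕ) := Option (Fin n × Bool)

/-- The nondegenerate symmetric bilinear form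
`y·z = 2 y₀ z₀ + Σ_q (y_q z_{q̄} + y_{q̄} z_q)` on `ℂ^{2n+1}`. -/
noncomputable def bform (n : ℕ) (y z : Idx n → ℂ) : ℂ :=
  2 * y none * z none +
    ∑ q : Fin n, (y (some (q, false)) * z (some (q, true)) +
      y (some (q, true)) * z (some (q, false)))

/-- A subspace is isotropic if the bilinear form vanishes identically on it. -/
def IsIsotropic (n : ℕ) (Λ : Submodule ℂ (Idx n → ℂ)) : Prop :=
  ∀ y ∈ Λ, ∀ z ∈ Λ, bform n y z = 0

/-- `H_S`: the coordinate subspace of vectors whose coordinates indexed by `S` vanish. -/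
noncomputable def coordSub (n : ℕ) (S : Set (Idx n)) : Submodule ℂ (Idx n → ℂ) where
  carrier := {v | ∀ i ∈ S, v i = 0}
  add_mem' := by
    intro a b ha hb i hi
    simp only [Pi.add_apply, ha i hi, hb i hi, add_zero]
  zero_mem' := by intro i hi; rfl
  smul_mem' := by
    intro c a ha i hi
    simp only [Pi.smul_apply, ha i hi, smul_zero]

/-- `rk_Λ(S) = n − dim(Λ ∩ H_S)`. -/
noncomputable def rk (n : ℕ) (Λ : Submodule ℂ (Idx n → ℂ)) (S : Set (Idx n)) : ℕ :=
  n - Module.finrank ℂ ↥(Λ ⊓ coordSub n S)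

/-- The set of coordinates in `[n] ∪ [n]̄` corresponding to a finite set of pairs. -/
def finIdx (n : ℕ) (S : Finset (Fin n × Bool)) : Set (Idx n) :=
  (fun p => (some p : Idx n)) '' ↑S

/-- A subset `S ⊆ [n] ∪ [n]̄` is admissible if it contains no pair `{q, q̄}`. -/
def Admissible (n : ℕ) (S : Finset (Fin n × Bool)) : Prop :=
  ∀ q : Fin n, ¬((q, false) ∈ S ∧ (q, true) ∈ S)

/-- `rk_Λ(S)` for `S ⊆ [n] ∪ [n]̄`. -/
noncomputable def rkF (n : ℕ) (Λ : Submodule ℂ (Idx n → ℂ)) (S : Finset (Fin n × Bool)) : ℕ :=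
  rk n Λ (finIdx n S)

/-- `g_Λ(S) = rk_Λ(S) − |S ∩ [n]̄|`. -/
noncomputable def gF (n : ℕ) (Λ : Submodule ℂ (Idx n → ℂ)) (S : Finset (Fin n × Bool)) : ℤ :=
  (rkF n Λ S : ℤ) - ((S.filter fun p => p.2 = true).card : ℤ)

/-- The delta-matroid `𝒟(Λ)`: maximal admissible subsets of full rank. -/
def deltaMatroid (n : ℕ) (Λ : Submodule ℂ (Idx n → ℂ)) : Set (Finset (Fin n × Bool)) :=
  {S | Admissible n S ∧ S.card = n ∧ rkF n Λ S = n}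

/-- `x(S) = Σ_{q ∈ S ∩ [n]} x_q − Σ_{q̄ ∈ S ∩ [n]̄} x_q`. -/
def xval (n : ℕ) (x : Fin n → ℝ) (S : Finset (Fin n × Bool)) : ℝ :=
  ∑ p ∈ S.filter (fun p => p.2 = false), x p.1 -
    ∑ p ∈ S.filter (fun p => p.2 = true), x p.1

/-- The polytope `𝒫(Λ)` cut out by the inequalities `x(S) ≤ g_Λ(S)` over admissible `S`. -/
def polytopeP (n : ℕ) (Λ : Submodule ℂ (Idx n → ℂ)) : Set (Fin n → ℝ) :=
  {x | ∀ S : Finset (Fin n × Bool), Admissible n S → xval n x S ≤ (gF n Λ S : ℝ)}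

/-- `χ(S')`: the 0–1 vector whose `q`-th coordinate is `1` exactly when `q ∈ S' ∩ [n]`. -/
def chi (n : ℕ) (S : Finset (Fin n × Bool)) : Fin n → ℝ :=
  fun q => if (q, false) ∈ S then 1 else 0

/-- `S₁ ⊔ S₂ = {a ∈ S₁ ∪ S₂ : ā ∉ S₁ ∪ S₂}`. -/
def sqcup (n : ℕ) (S₁ S₂ : Finset (Fin n × Bool)) : Finset (Fin n × Bool) :=
  (S₁ ∪ S₂).filter (fun p => (p.1, !p.2) ∉ S₁ ∪ S₂)

/-! ### The operations `∩` and `⊔` on signed sets -/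

/-- The sign with which a coordinate enters `x(S)`: `-1` for barred elements, `1` otherwise. -/
def sg (b : Bool) : ℝ := if b then -1 else 1

theorem xval_eq_sum (n : ℕ) (x : Fin n → ℝ) (S : Finset (Fin n × Bool)) :
    xval n x S = ∑ p ∈ S, sg p.2 * x p.1 := by
  unfold xval
  rw [Finset.sum_filter, Finset.sum_filter, ← Finset.sum_sub_distrib]
  refine Finset.sum_congr rfl fun p _ => ?_
  rcases p with ⟨q, b⟩
  cases b <;> simp [sg]

/-- The `q` for which both `q` and `q̄` lie in `U`. -/
def conflicts (n : ℕ) (U : Finset (Fin n × Bool)) : Finset (Fin n) :=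
  Finset.univ.filter fun q => (q, false) ∈ U ∧ (q, true) ∈ U

theorem mem_conflicts {n : ℕ} {U : Finset (Fin n × Bool)} {q : Fin n} :
    q ∈ conflicts n U ↔ (q, false) ∈ U ∧ (q, true) ∈ U := by simp [conflicts]

/-- `S ∪ T` is the (disjoint) union of `S ⊔ T` and the pairs `{q, q̄}` contained in it. -/
theorem sqcup_union (n : ℕ) (S T : Finset (Fin n × Bool)) :
    sqcup n S T ∪ conflicts n (S ∪ T) ×ˢ Finset.univ = S ∪ T := by
  ext ⟨q, b⟩
  simp only [sqcup, Finset.mem_union (s := Finset.filter _ _), Finset.mem_filter,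
    Finset.mem_product, mem_conflicts, Finset.mem_univ, and_true]
  cases b <;> simp only [Bool.not_false, Bool.not_true] <;> tauto

theorem sqcup_disjoint (n : ℕ) (S T : Finset (Fin n × Bool)) :
    Disjoint (sqcup n S T) (conflicts n (S ∪ T) ×ˢ Finset.univ) := by
  rw [Finset.disjoint_left]
  rintro ⟨q, b⟩
  simp only [sqcup, Finset.mem_filter, Finset.mem_product, mem_conflicts, Finset.mem_univ,
    and_true]
  cases b <;> simp only [Bool.not_false, Bool.not_true] <;> tauto

theorem sqcup_admissible (n : ℕ) (S T : Finset (Fin n × Bool)) :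
    Admissible n (sqcup n S T) := by
  rintro q ⟨h1, h2⟩
  simp only [sqcup, Finset.mem_filter] at h1 h2
  exact h1.2 h2.1

theorem sum_sqcup {M : Type*} [AddCommGroup M] (n : ℕ) (f : Fin n × Bool → M)
    (S T : Finset (Fin n × Bool)) :
    ∑ p ∈ S, f p + ∑ p ∈ T, f p = ∑ p ∈ S ∩ T, f p + ∑ p ∈ sqcup n S T, f p +
      ∑ q ∈ conflicts n (S ∪ T), (f (q, true) + f (q, false)) := by
  rw [← Finset.sum_union_inter, ← sqcup_union n S T, Finset.sum_union (sqcup_disjoint n S T),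
    sqcup_union, Finset.sum_product]
  simp only [Fintype.sum_bool]
  abel

theorem xval_sqcup (n : ℕ) (x : Fin n → ℝ) (S T : Finset (Fin n × Bool)) :
    xval n x S + xval n x T = xval n x (S ∩ T) + xval n x (sqcup n S T) := by
  simp only [xval_eq_sum]
  rw [sum_sqcup]
  simp [sg]

/-- The number of barred elements is additive up to one unit per cancelled pair `{q, q̄}`. -/
theorem bar_sqcup (n : ℕ) (S T : Finset (Fin n × Bool)) :
    ((S.filter fun p => p.2 = true).card : ℤ) + ((T.filter fun p => p.2 = true).card : ℤ) =
      (((S ∩ T).filter fun p => p.2 = true).card : ℤ) +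
        (((sqcup n S T).filter fun p => p.2 = true).card : ℤ) +
        ((conflicts n (S ∪ T)).card : ℤ) := by
  simp only [Finset.card_filter, Nat.cast_sum]
  rw [sum_sqcup]
  simp

/-! ### The rank function -/

theorem finrank_inf_le (n : ℕ) (Λ : Submodule ℂ (Idx n → ℂ)) (hΛ : Module.finrank ℂ ↥Λ = n)
    (S : Set (Idx n)) : Module.finrank ℂ ↥(Λ ⊓ coordSub n S) ≤ n :=
  (Submodule.finrank_mono inf_le_left).trans hΛ.le

theorem coordSub_anti {n : ℕ} {S T : Set (Idx n)} (h : S ⊆ T) : coordSub n T ≤ coordSub n S :=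
  fun _ hv i hi => hv i (h hi)

theorem rkF_mono (n : ℕ) (Λ : Submodule ℂ (Idx n → ℂ)) {S T : Finset (Fin n × Bool)}
    (h : S ⊆ T) : rkF n Λ S ≤ rkF n Λ T := by
  unfold rkF rk
  have : Module.finrank ℂ ↥(Λ ⊓ coordSub n (finIdx n T)) ≤
      Module.finrank ℂ ↥(Λ ⊓ coordSub n (finIdx n S)) :=
    Submodule.finrank_mono
      (inf_le_inf_left _ (coordSub_anti (Set.image_mono (Finset.coe_subset.2 h))))
  omega

theorem rkF_submodular (n : ℕ) (Λ : Submodule ℂ (Idx n → ℂ)) (hΛ : Module.finrank ℂ ↥Λ = n)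
    (S T : Finset (Fin n × Bool)) :
    rkF n Λ (S ∩ T) + rkF n Λ (S ∪ T) ≤ rkF n Λ S + rkF n Λ T := by
  have h := Submodule.finrank_sup_add_finrank_inf_eq
    (Λ ⊓ coordSub n (finIdx n S)) (Λ ⊓ coordSub n (finIdx n T))
  have h1 : (Λ ⊓ coordSub n (finIdx n S)) ⊓ (Λ ⊓ coordSub n (finIdx n T)) =
      Λ ⊓ coordSub n (finIdx n (S ∪ T)) := by
    rw [← inf_inf_distrib_left]
    congr 1
    ext v
    simp only [finIdx, coordSub, Submodule.mem_inf, Submodule.mem_mk, AddSubmonoid.mem_mk,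
      Set.forall_mem_image, Finset.mem_coe, Finset.mem_union]
    constructor
    · rintro ⟨a, b⟩ p (hp | hp)
      exacts [a hp, b hp]
    · exact fun a => ⟨fun p hp => a (Or.inl hp), fun p hp => a (Or.inr hp)⟩
  have h2 : Module.finrank ℂ
      ↥((Λ ⊓ coordSub n (finIdx n S)) ⊔ (Λ ⊓ coordSub n (finIdx n T))) ≤
      Module.finrank ℂ ↥(Λ ⊓ coordSub n (finIdx n (S ∩ T))) := by
    apply Submodule.finrank_mono
    apply sup_le <;> refine inf_le_inf_left _ (coordSub_anti (Set.image_mono ?_)) <;> simp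
  rw [h1] at h
  have a1 := finrank_inf_le n Λ hΛ (finIdx n S)
  have a2 := finrank_inf_le n Λ hΛ (finIdx n T)
  have a3 := finrank_inf_le n Λ hΛ (finIdx n (S ∪ T))
  have a4 := finrank_inf_le n Λ hΛ (finIdx n (S ∩ T))
  unfold rkF rk
  omega

/-- The rank jumps when `a` is added to `S`, if some vector of `Λ` vanishes on `S` but not at `a`. -/
theorem rkF_lt_insert (n : ℕ) (Λ : Submodule ℂ (Idx n → ℂ)) (hΛ : Module.finrank ℂ ↥Λ = n)
    (S : Finset (Fin n × Bool)) (a : Fin n × Bool) (v : Idx n → ℂ) (hv : v ∈ Λ)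
    (hS : ∀ p ∈ S, v (some p) = 0) (ha : v (some a) ≠ 0) :
    rkF n Λ S + 1 ≤ rkF n Λ (insert a S) := by
  have h : Module.finrank ℂ ↥(Λ ⊓ coordSub n (finIdx n (insert a S))) <
      Module.finrank ℂ ↥(Λ ⊓ coordSub n (finIdx n S)) := by
    apply Submodule.finrank_lt_finrank_of_lt
    refine lt_of_le_of_ne (inf_le_inf_left _ (coordSub_anti (Set.image_mono (by simp)))) ?_
    intro he
    have hm : v ∈ Λ ⊓ coordSub n (finIdx n S) := by
      refine ⟨hv, ?_⟩
      rintro _ ⟨p, hp, rfl⟩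
      exact hS p hp
    rw [← he] at hm
    exact ha (hm.2 _ ⟨a, by simp, rfl⟩)
  have a1 := finrank_inf_le n Λ hΛ (finIdx n S)
  unfold rkF rk
  omega

theorem rkF_singleton_le (n : ℕ) (Λ : Submodule ℂ (Idx n → ℂ)) (hΛ : Module.finrank ℂ ↥Λ = n)
    (a : Fin n × Bool) : rkF n Λ {a} ≤ 1 := by
  have h := LinearMap.finrank_range_add_finrank_ker
    ((LinearMap.proj (R := ℂ) (φ := fun _ : Idx n => ℂ) (some a)).domRestrict Λ)
  have h1 := Submodule.finrank_le (LinearMap.range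
    ((LinearMap.proj (R := ℂ) (φ := fun _ : Idx n => ℂ) (some a)).domRestrict Λ))
  have h2 : Module.finrank ℂ ↥(LinearMap.ker
      ((LinearMap.proj (R := ℂ) (φ := fun _ : Idx n => ℂ) (some a)).domRestrict Λ)) ≤
      Module.finrank ℂ ↥(Λ ⊓ coordSub n (finIdx n {a})) := by
    rw [← Submodule.finrank_map_subtype_eq]
    apply Submodule.finrank_mono
    rintro _ ⟨v, hv, rfl⟩
    refine ⟨v.2, ?_⟩
    rintro _ ⟨p, hp, rfl⟩
    obtain rfl : p = a := by simpa using hp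
    simpa using hv
  rw [Module.finrank_self] at h1
  unfold rkF rk
  omega

/-! ### Isotropy and bisubmodularity -/

/-- The form `bform` as a Mathlib bilinear form. -/
noncomputable def bilin (n : ℕ) : LinearMap.BilinForm ℂ (Idx n → ℂ) :=
  LinearMap.mk₂ ℂ (bform n)
    (fun y y' z => by
      simp only [bform, Pi.add_apply, add_mul, mul_add, Finset.sum_add_distrib]; ring)
    (fun c y z => by
      simp only [bform, Pi.smul_apply, smul_eq_mul, mul_add, Finset.mul_sum]
      congr 1
      · ring
      · exact Finset.sum_congr rfl fun q _ => by ring)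
    (fun y z z' => by
      simp only [bform, Pi.add_apply, mul_add, Finset.sum_add_distrib]; ring)
    (fun c y z => by
      simp only [bform, Pi.smul_apply, smul_eq_mul, mul_add, Finset.mul_sum]
      congr 1
      · ring
      · exact Finset.sum_congr rfl fun q _ => by ring)

theorem bilin_apply (n : ℕ) (y z : Idx n → ℂ) : bilin n y z = bform n y z := rfl

theorem bform_comm (n : ℕ) (y z : Idx n → ℂ) : bform n y z = bform n z y := by
  unfold bform
  congr 1
  · ring
  · exact Finset.sum_congr rfl fun q _ => by ring

/-- The vector representing the linear form `v ↦ ∑ f_p v_p` in the coordinates other than `0`: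
its coordinate at `p̄` is `f p`, and its coordinate at `0` vanishes. -/
def dualVec (n : ℕ) (f : Fin n × Bool → ℂ) : Idx n → ℂ
  | none => 0
  | some p => f (p.1, !p.2)

theorem bform_dualVec (n : ℕ) (v : Idx n → ℂ) (f : Fin n × Bool → ℂ) :
    bform n v (dualVec n f) = ∑ p, f p * v (some p) := by
  simp only [bform, dualVec, mul_zero, zero_add, Fintype.sum_prod_type, Fintype.sum_bool,
    Bool.not_true, Bool.not_false]
  exact Finset.sum_congr rfl fun q _ => by ring

theorem bilin_nondegenerate (n : ℕ) : (bilin n).Nondegenerate := by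
  have key : ∀ y : Idx n → ℂ, (∀ z, bform n y z = 0) → y = 0 := by
    intro y hy
    funext i
    rcases i with _ | p
    · simpa [bform] using hy (Pi.single none 1)
    · simpa [bform_dualVec, Pi.single_apply] using hy (dualVec n (Pi.single p 1))
  exact ⟨fun y hy => key y hy, fun y hy => key y fun z => by rw [bform_comm]; exact hy z⟩

/-- If the coordinate `a` vanishes on the vectors of `Λ` vanishing on `T`, then on `Λ` it is a linear
combination of the coordinates in `T`; this relation is a vector of `Λ^⊥`. -/
theorem exists_relation (n : ℕ) (Λ : Submodule ℂ (Idx n → ℂ)) (T : Finset (Fin n × Bool))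
    (a : Fin n × Bool) (ha : a ∉ T)
    (h : ∀ v ∈ Λ, (∀ p ∈ T, v (some p) = 0) → v (some a) = 0) :
    ∃ f : Fin n × Bool → ℂ, f a = 1 ∧ (∀ p, p ∉ insert a T → f p = 0) ∧
      ∀ v ∈ Λ, bform n v (dualVec n f) = 0 := by
  let L : Fin n × Bool → (Λ →ₗ[ℂ] ℂ) := fun p =>
    (LinearMap.proj (R := ℂ) (φ := fun _ : Idx n => ℂ) (some p)).domRestrict Λ
  have hL : L a ∈ Submodule.span ℂ (Set.range fun p : T => L p) := by
    apply mem_span_of_iInf_ker_le_ker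
    intro v hv
    simp only [Submodule.mem_iInf, LinearMap.mem_ker] at hv ⊢
    exact h v v.2 fun p hp => hv ⟨p, hp⟩
  obtain ⟨c, hc⟩ := (Submodule.mem_span_range_iff_exists_fun ℂ).1 hL
  refine ⟨fun p => if hp : p ∈ T then -c ⟨p, hp⟩ else if p = a then 1 else 0, ?_, ?_, ?_⟩
  · simp [ha]
  · intro p hp
    simp only [Finset.mem_insert, not_or] at hp
    simp [hp]
  · intro v hv
    have h1 : ∑ p : T, c p * v (some p) = v (some a) := by
      simpa [L] using congrArg (fun l : Λ →ₗ[ℂ] ℂ => l ⟨v, hv⟩) hc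
    rw [bform_dualVec, ← Finset.sum_subset (Finset.subset_univ (insert a T)),
      Finset.sum_insert ha, ← Finset.sum_coe_sort T]
    · rw [Finset.univ_eq_attach] at h1
      simp [ha, h1]
    · intro p _ hp
      simp only [Finset.mem_insert, not_or] at hp
      simp [hp]

theorem admissible_insert {n : ℕ} {T : Finset (Fin n × Bool)} (hT : Admissible n T) {q : Fin n}
    (hq : ∀ b, (q, b) ∉ T) (b : Bool) : Admissible n (insert (q, b) T) := by
  intro r
  have := hT r
  grind

/-- A vector supported on an admissible set of coordinates is isotropic. -/
theorem bform_dualVec_self {n : ℕ} {A : Finset (Fin n × Bool)} (hA : Admissible n A)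
    {f : Fin n × Bool → ℂ} (hf : ∀ p, p ∉ A → f p = 0) :
    bform n (dualVec n f) (dualVec n f) = 0 := by
  rw [bform_dualVec]
  refine Finset.sum_eq_zero fun p _ => ?_
  by_contra hne
  have h1 : p ∈ A := by
    by_contra h; exact hne (by rw [hf p h, zero_mul])
  have h2 : (p.1, !p.2) ∈ A := by
    by_contra h; exact hne (by rw [dualVec, hf _ h, mul_zero])
  obtain ⟨r, b⟩ := p
  cases b
  · exact hA r ⟨h1, h2⟩
  · exact hA r ⟨h2, h1⟩

/-- If `T` is admissible and contains neither `q` nor `q̄`, then some vector of `Λ` vanishing on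
`T` does not vanish at both `q` and `q̄`. Otherwise `exists_relation` gives isotropic vectors `u`
and `w` in `Λ^⊥` with `u · w = 1`, so that `Λ ⊕ ⟨u, w⟩` is an `(n + 2)`-dimensional subspace of the
`(n + 1)`-dimensional space `Λ^⊥`. -/
theorem exists_nonzero (n : ℕ) (Λ : Submodule ℂ (Idx n → ℂ)) (hiso : IsIsotropic n Λ)
    (hΛ : Module.finrank ℂ ↥Λ = n) (T : Finset (Fin n × Bool)) (hT : Admissible n T)
    (q : Fin n) (hq : ∀ b, (q, b) ∉ T) :
    ∃ b, ∃ v ∈ Λ, (∀ p ∈ T, v (some p) = 0) ∧ v (some (q, b)) ≠ 0 := by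
  by_contra hcon
  push Not at hcon
  obtain ⟨f, fa, f0, fΛ⟩ := exists_relation n Λ T (q, false) (hq _) (hcon false)
  obtain ⟨g, ga, g0, gΛ⟩ := exists_relation n Λ T (q, true) (hq _) (hcon true)
  have hins : ∀ b, Admissible n (insert (q, b) T) := fun b => admissible_insert hT hq b
  have hff := bform_dualVec_self (hins false) f0
  have hgg := bform_dualVec_self (hins true) g0
  have hfg : bform n (dualVec n f) (dualVec n g) = 1 := by
    rw [bform_dualVec, Finset.sum_eq_single (q, true)]
    · simp [dualVec, fa, ga]
    · intro p _ hp
      by_contra hne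
      have h1 : p ∈ insert (q, true) T := by
        by_contra h; exact hne (by rw [g0 p h, zero_mul])
      have h2 : (p.1, !p.2) ∈ insert (q, false) T := by
        by_contra h; exact hne (by rw [dualVec, f0 _ h, mul_zero])
      obtain ⟨r, b⟩ := p
      have h3 := hT r
      have h4 := hq false
      have h5 := hq true
      cases b <;> simp at h1 h2 hp <;> grind
    · simp
  -- `(l, s, t) ↦ l + s u + t w` embeds an `(n + 2)`-dimensional space in `Λ^⊥`,
  -- where `u = dualVec n f` and `w = dualVec n g`.
  let Φ : (Λ × ℂ × ℂ) →ₗ[ℂ] (Idx n → ℂ) :=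
    Λ.subtype.coprod ((LinearMap.toSpanSingleton ℂ _ (dualVec n f)).coprod
      (LinearMap.toSpanSingleton ℂ _ (dualVec n g)))
  have hΦ : ∀ l s t, Φ (l, s, t) = l + (s • dualVec n f + t • dualVec n g) := fun l s t => by
    simp [Φ]
  have hbil : ∀ y (l : Λ) s t, bform n y (Φ (l, s, t)) =
      bform n y l + (s * bform n y (dualVec n f) + t * bform n y (dualVec n g)) := by
    intro y l s t
    rw [hΦ]
    simp only [← bilin_apply, map_add, map_smul, smul_eq_mul]
  have hinj : Function.Injective Φ := by
    rw [← LinearMap.ker_eq_bot, LinearMap.ker_eq_bot']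
    rintro ⟨l, s, t⟩ h
    have e1 := hbil (dualVec n f) l s t
    have e2 := hbil (dualVec n g) l s t
    rw [h, ← bilin_apply, map_zero, bform_comm, fΛ l l.2, hff, hfg] at e1
    rw [h, ← bilin_apply, map_zero, bform_comm n _ l, gΛ l l.2, hgg, bform_comm, hfg] at e2
    obtain rfl : t = 0 := by simpa using e1.symm
    obtain rfl : s = 0 := by simpa using e2.symm
    rw [hΦ] at h
    simpa using h
  have hrange : LinearMap.range Φ ≤ (bilin n).orthogonal Λ := by
    rintro _ ⟨⟨l, s, t⟩, rfl⟩ y hy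
    change bform n y _ = 0
    rw [hbil, fΛ y hy, gΛ y hy, hiso y hy l l.2]
    simp
  have h1 := Submodule.finrank_mono hrange
  rw [LinearMap.finrank_range_of_inj hinj,
    LinearMap.BilinForm.finrank_orthogonal (bilin_nondegenerate n), hΛ] at h1
  simp [hΛ] at h1
  omega

/-- Adding `k` full pairs `{q, q̄}` disjoint from the admissible set `T` and its conjugate raises the
rank by at least `k`: by `exists_nonzero`, one element of each pair can be chosen in turn so that
the set stays admissible and the rank rises by one. -/
theorem rkF_add_pairs (n : ℕ) (Λ : Submodule ℂ (Idx n → ℂ)) (hiso : IsIsotropic n Λ)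
    (hΛ : Module.finrank ℂ ↥Λ = n) (Q : Finset (Fin n)) :
    ∀ T : Finset (Fin n × Bool), Admissible n T → (∀ q ∈ Q, ∀ b, (q, b) ∉ T) →
      rkF n Λ T + Q.card ≤ rkF n Λ (T ∪ Q ×ˢ Finset.univ) := by
  induction Q using Finset.induction_on with
  | empty => intro T _ _; simp
  | insert q Q hqQ ih =>
    intro T hT hQ
    obtain ⟨b, v, hv, hvT, hvb⟩ := exists_nonzero n Λ hiso hΛ T hT q (hQ q (by simp))
    have h1 := rkF_lt_insert n Λ hΛ T (q, b) v hv hvT hvb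
    have h2 := ih (insert (q, b) T)
      (admissible_insert hT (hQ q (by simp)) b)
      (by
        intro r hr b'
        have := hQ r (by simp [hr]) b'
        grind)
    have h3 : rkF n Λ (insert (q, b) T ∪ Q ×ˢ Finset.univ) ≤
        rkF n Λ (T ∪ insert q Q ×ˢ Finset.univ) := by
      apply rkF_mono
      intro p
      simp only [Finset.mem_union, Finset.mem_insert, Finset.mem_product, Finset.mem_univ,
        and_true]
      rintro ((rfl | h) | h) <;> simp [*]
    rw [Finset.card_insert_of_notMem hqQ]
    omega

theorem gF_bisubmodular (n : ℕ) (Λ : Submodule ℂ (Idx n → ℂ)) (hiso : IsIsotropic n Λ)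
    (hΛ : Module.finrank ℂ ↥Λ = n) (S T : Finset (Fin n × Bool)) :
    gF n Λ (S ∩ T) + gF n Λ (sqcup n S T) ≤ gF n Λ S + gF n Λ T := by
  have h1 := rkF_submodular n Λ hΛ S T
  have h2 := rkF_add_pairs n Λ hiso hΛ (conflicts n (S ∪ T)) (sqcup n S T)
    (sqcup_admissible n S T) (fun q hq b hb =>
      Finset.disjoint_left.1 (sqcup_disjoint n S T) hb (by simpa using hq))
  rw [sqcup_union] at h2
  have h3 := bar_sqcup n S T
  unfold gF
  omega

/-! ### Extreme points -/

theorem xval_add_smul (n : ℕ) (x d : Fin n → ℝ) (ε : ℝ) (S : Finset (Fin n × Bool)) :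
    xval n (x + ε • d) S = xval n x S + ε * xval n d S := by
  simp only [xval_eq_sum, Finset.mul_sum, ← Finset.sum_add_distrib]
  refine Finset.sum_congr rfl fun p _ => ?_
  simp only [Pi.add_apply, Pi.smul_apply, smul_eq_mul]
  ring

/-- The vector `e_q` if `a = q`, and `-e_q` if `a = q̄`. -/
def signedUnit (n : ℕ) (a : Fin n × Bool) : Fin n → ℝ := Pi.single a.1 (sg a.2)

theorem xval_signedUnit (n : ℕ) (a : Fin n × Bool) (S : Finset (Fin n × Bool)) :
    xval n (signedUnit n a) S =
      (if a ∈ S then 1 else 0) - (if (a.1, !a.2) ∈ S then 1 else 0) := by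
  obtain ⟨q, b⟩ := a
  have h : ∀ p : Fin n × Bool, sg p.2 * signedUnit n (q, b) p.1 =
      (if p = (q, b) then 1 else 0) - (if p = (q, !b) then 1 else 0) := by
    rintro ⟨r, c⟩
    by_cases hr : r = q
    · subst hr
      cases b <;> cases c <;> simp [sg, signedUnit]
    · simp [signedUnit, hr]
  rw [xval_eq_sum, Finset.sum_congr rfl fun p _ => h p, Finset.sum_sub_distrib,
    Finset.sum_ite_eq', Finset.sum_ite_eq']

/-- A direction along which all tight inequalities stay tight can be followed both ways for a short
time, so at an extreme point it is zero. -/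
theorem eq_zero_of_tight (n : ℕ) (Λ : Submodule ℂ (Idx n → ℂ)) (x : Fin n → ℝ)
    (hx : x ∈ Set.extremePoints ℝ (polytopeP n Λ)) (d : Fin n → ℝ)
    (hd : ∀ S, Admissible n S → xval n x S = gF n Λ S → xval n d S = 0) : d = 0 := by
  have hev : ∀ᶠ ε : ℝ in nhds 0, x + ε • d ∈ polytopeP n Λ := by
    change ∀ᶠ ε : ℝ in nhds 0, ∀ S, Admissible n S → xval n (x + ε • d) S ≤ gF n Λ S
    rw [Filter.eventually_all]
    intro S
    by_cases hS : Admissible n S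
    · simp only [xval_add_smul]
      rcases (hx.1 S hS).eq_or_lt with h | h
      · simp [hd S hS h, h]
      · have hc : Filter.Tendsto (fun ε : ℝ => xval n x S + ε * xval n d S) (nhds 0)
            (nhds (xval n x S + 0 * xval n d S)) := Continuous.tendsto (by fun_prop) 0
        rw [zero_mul, add_zero] at hc
        filter_upwards [hc.eventually_lt_const h] with ε hε _
        exact hε.le
    · simp [hS]
  obtain ⟨δ, hδ, hball⟩ := Metric.eventually_nhds_iff.1 hev
  have h1 := hball (y := δ / 2) (by simp [abs_of_pos hδ]; linarith)
  have h2 := hball (y := -(δ / 2)) (by simp [abs_of_pos hδ]; linarith)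
  have h3 := hx.2 h1 h2 ⟨1 / 2, 1 / 2, by norm_num, by norm_num, by norm_num, by
    ext i; simp; ring⟩
  have h4 : (δ / 2) • d = 0 := by simpa using h3
  exact (smul_eq_zero.1 h4).resolve_left (by positivity)

/-- The tight sets of a point of the polytope are closed under `∩` and `⊔`. -/
theorem tight_inter_sqcup (n : ℕ) (Λ : Submodule ℂ (Idx n → ℂ)) (hiso : IsIsotropic n Λ)
    (hΛ : Module.finrank ℂ ↥Λ = n) (x : Fin n → ℝ) (hx : x ∈ polytopeP n Λ)
    (S T : Finset (Fin n × Bool)) (hS : Admissible n S)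
    (tS : xval n x S = gF n Λ S) (tT : xval n x T = gF n Λ T) :
    xval n x (S ∩ T) = gF n Λ (S ∩ T) ∧ xval n x (sqcup n S T) = gF n Λ (sqcup n S T) := by
  have h1 := hx (S ∩ T) (fun q h => hS q (by simp at h; tauto))
  have h2 := hx (sqcup n S T) (sqcup_admissible n S T)
  have h3 := xval_sqcup n x S T
  have h4 : (gF n Λ (S ∩ T) : ℝ) + gF n Λ (sqcup n S T) ≤ gF n Λ S + gF n Λ T := by
    exact_mod_cast gF_bisubmodular n Λ hiso hΛ S T
  constructor <;> linarith

/-- Integrality of the extreme points. If some coordinate of `x` is fractional, a nonzero direction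
preserving all tight sets is `e_q` when no tight set involves a fractional coordinate, and otherwise
`± e_a ∓ e_b` for two fractional elements `a`, `b` of an inclusion-minimal tight set `M` containing
a fractional element. -/
theorem coord_mem_int (n : ℕ) (Λ : Submodule ℂ (Idx n → ℂ)) (hiso : IsIsotropic n Λ)
    (hΛ : Module.finrank ℂ ↥Λ = n) (x : Fin n → ℝ)
    (hx : x ∈ Set.extremePoints ℝ (polytopeP n Λ)) (q : Fin n) :
    x q ∈ (Int.castRingHom ℝ).range := by
  classical
  set Z := (Int.castRingHom ℝ).range with hZ
  have hsgZ : ∀ b, sg b ∈ Z := by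
    intro b
    cases b
    · simp [sg]
    · simp [sg]
  have hsg : ∀ b, sg b * sg b = 1 := by intro b; cases b <;> simp [sg]
  by_contra hq
  by_cases hex : ∃ M, (Admissible n M ∧ xval n x M = gF n Λ M) ∧ ∃ a ∈ M, x a.1 ∉ Z
  · obtain ⟨M, ⟨⟨hM, tM⟩, a, haM, haZ⟩, hmin⟩ := exists_minimal_of_wellFoundedLT
      (fun M => (Admissible n M ∧ xval n x M = gF n Λ M) ∧ ∃ a ∈ M, x a.1 ∉ Z) hex
    -- integrality of `x(M) = g(M)` forces a second fractional element
    obtain ⟨b, hbM, hba, hbZ⟩ : ∃ b ∈ M, b ≠ a ∧ x b.1 ∉ Z := by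
      by_contra hno
      push Not at hno
      apply haZ
      have h1 : sg a.2 * x a.1 = gF n Λ M - ∑ p ∈ M.erase a, sg p.2 * x p.1 := by
        rw [← tM, xval_eq_sum, ← Finset.add_sum_erase M _ haM]
        ring
      have h2 : sg a.2 * x a.1 ∈ Z := by
        rw [h1]
        refine Z.sub_mem ⟨_, rfl⟩ (Z.sum_mem fun p hp => Z.mul_mem (hsgZ _) ?_)
        exact hno p (Finset.mem_of_mem_erase hp) (Finset.ne_of_mem_erase hp)
      have h3 := Z.mul_mem (hsgZ a.2) h2
      rwa [← mul_assoc, hsg, one_mul] at h3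
    -- a tight set meeting `M` in a fractional element contains `M`
    have hsub : ∀ S, xval n x S = gF n Λ S → ∀ c ∈ M, x c.1 ∉ Z → c ∈ S → M ⊆ S := by
      intro S tS c hcM hcZ hcS
      have h1 := (tight_inter_sqcup n Λ hiso hΛ x hx.1 M S hM tM tS).1
      have h2 := hmin (y := M ∩ S) ⟨⟨fun r h => hM r (by simp at h; tauto), h1⟩, c,
        Finset.mem_inter.2 ⟨hcM, hcS⟩, hcZ⟩ Finset.inter_subset_left
      exact fun p hp => (Finset.mem_inter.1 (h2 hp)).2
    -- if a tight `S` cancels `c` but not `e` of `M`, then `S ⊔ M` is tight and contains `e`, not `c`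
    have hbar : ∀ S, xval n x S = gF n Λ S → ∀ c ∈ M, ∀ e ∈ M, x e.1 ∉ Z → c ∉ S →
        (c.1, !c.2) ∈ S → (e.1, !e.2) ∈ S := by
      intro S tS c hcM e heM heZ hcS hcS'
      by_contra he
      have heM' : (e.1, !e.2) ∉ M := by
        intro h
        obtain ⟨r, b⟩ := e
        cases b
        · exact hM r ⟨heM, h⟩
        · exact hM r ⟨h, heM⟩
      have h1 : e ∈ sqcup n M S := by simp [sqcup, heM, heM', he]
      have h2 := hsub _ (tight_inter_sqcup n Λ hiso hΛ x hx.1 M S hM tM tS).2 e heM heZ h1 hcM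
      simp [sqcup, hcS'] at h2
    have hd := eq_zero_of_tight n Λ x hx (signedUnit n a - signedUnit n b) (by
      intro S hS tS
      have h1 : a ∈ S ↔ b ∈ S :=
        ⟨fun h => hsub S tS a haM haZ h hbM, fun h => hsub S tS b hbM hbZ h haM⟩
      have h2 : (a.1, !a.2) ∈ S ↔ (b.1, !b.2) ∈ S := by
        have hn : ∀ c : Fin n × Bool, (c.1, !c.2) ∈ S → c ∉ S := by
          rintro ⟨r, b⟩ h h'
          cases b
          · exact hS r ⟨h', h⟩
          · exact hS r ⟨h, h'⟩
        exact ⟨fun h => hbar S tS a haM b hbM hbZ (hn a h) h,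
          fun h => hbar S tS b hbM a haM haZ (hn b h) h⟩
      have h3 : signedUnit n a - signedUnit n b = signedUnit n a + (-1 : ℝ) • signedUnit n b := by
        simp [sub_eq_add_neg]
      rw [h3, xval_add_smul, xval_signedUnit, xval_signedUnit]
      simp only [h1, h2]
      ring)
    have hab : a.1 ≠ b.1 := by
      intro h
      obtain ⟨r, s⟩ := a
      obtain ⟨r', s'⟩ := b
      obtain rfl : r = r' := h
      have := hM r
      cases s <;> cases s' <;> simp_all
    have h5 := congrFun hd a.1
    have h6 := hsg a.2
    simp [signedUnit, hab] at h5
    simp [h5] at h6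
  · have hd := eq_zero_of_tight n Λ x hx (signedUnit n (q, false)) (by
      intro S hS tS
      have h1 : ∀ b, (q, b) ∉ S := fun b hb => hex ⟨S, ⟨hS, tS⟩, _, hb, hq⟩
      simp [xval_signedUnit, h1])
    have h5 := congrFun hd q
    simp [signedUnit, sg] at h5

theorem coord_bounds (n : ℕ) (Λ : Submodule ℂ (Idx n → ℂ)) (hΛ : Module.finrank ℂ ↥Λ = n)
    (x : Fin n → ℝ) (hx : x ∈ polytopeP n Λ) (q : Fin n) : 0 ≤ x q ∧ x q ≤ 1 := by
  have key : ∀ b, sg b * x q ≤ 1 - (if b then 1 else 0) := by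
    intro b
    have h1 := hx {(q, b)} (fun r h => by simp at h; grind)
    have h2 : (gF n Λ {(q, b)} : ℝ) ≤ 1 - (if b then 1 else 0) := by
      have h3 := rkF_singleton_le n Λ hΛ (q, b)
      have h4 : gF n Λ {(q, b)} ≤ 1 - (if b then 1 else 0) := by
        unfold gF
        cases b <;> simp [Finset.filter_singleton] <;> omega
      exact_mod_cast h4
    rw [xval_eq_sum, Finset.sum_singleton] at h1
    exact h1.trans h2
  have h1 := key false
  have h2 := key true
  simp [sg] at h1 h2
  exact ⟨h2, h1⟩

theorem stmt11 (n : ℕ) (hn : 2 ≤ n)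
    (Λ : Submodule ℂ (Idx n → ℂ)) (hiso : IsIsotropic n Λ)
    (hΛ : Module.finrank ℂ ↥Λ = n)
    (x : Fin n → ℝ) (hx : x ∈ Set.extremePoints ℝ (polytopeP n Λ)) :
    ∃ S ∈ deltaMatroid n Λ, x = chi n S := by
  classical
  have h01 : ∀ q, x q = 0 ∨ x q = 1 := by
    intro q
    obtain ⟨k, hk⟩ := coord_mem_int n Λ hiso hΛ x hx q
    obtain ⟨h0, h1⟩ := coord_bounds n Λ hΛ x hx.1 q
    change (k : ℝ) = x q at hk
    rw [← hk] at h0 h1 ⊢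
    norm_cast at h0 h1 ⊢
    omega
  let S : Finset (Fin n × Bool) :=
    Finset.univ.image fun q => (q, decide (x q = 0))
  have hinj : Function.Injective fun q : Fin n => (q, decide (x q = 0)) :=
    fun a b h => congrArg Prod.fst h
  have hmem : ∀ q b, (q, b) ∈ S ↔ decide (x q = 0) = b := by
    intro q b
    simp [S]
  have hadm : Admissible n S := by
    rintro q ⟨h1, h2⟩
    rw [hmem] at h1 h2
    simp [h1] at h2
  have hcard : S.card = n := by
    rw [Finset.card_image_of_injective _ hinj, Finset.card_univ, Fintype.card_fin]
  refine ⟨S, ⟨hadm, hcard, ?_⟩, ?_⟩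
  · -- `x(S)` counts the unbarred elements of `S`, so `x(S) ≤ g(S)` reads `n ≤ rk(S)`.
    have h1 := hx.1 S hadm
    have h2 : xval n x S + ((S.filter fun p => p.2 = true).card : ℝ) = n := by
      rw [xval_eq_sum, Finset.card_filter, Nat.cast_sum, ← Finset.sum_add_distrib]
      rw [Finset.sum_image (fun a _ b _ h => hinj h)]
      rw [Finset.sum_congr rfl (g := fun _ => (1 : ℝ))]
      · simp
      · intro q _
        rcases h01 q with h | h <;> simp [h, sg]
    have h3 : (n : ℝ) ≤ rkF n Λ S := by
      unfold gF at h1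
      push_cast at h1
      linarith
    exact le_antisymm (Nat.sub_le _ _) (by exact_mod_cast h3)
  · funext q
    simp only [chi, hmem]
    rcases h01 q with h | h <;> simp [h]
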